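/- Let X be a real Banach space that is uniformly convex and uniformly smooth, let 1 < p < ∞, and let M be a closed linear subspace of X. If (x_n) is a sequence in X that is Bregman monotone with respect to M and satisfies D_p(M, x_n) → 0 as n → ∞, then (x_n) converges in norm to a point of M. -/

import Mathlib

open Filter Topology

noncomputable section

/-- The modulus of convexity of a normed space `X`. -/
def modConvex (X : Type*) [NormedAddCommGroup X] (ε : ℝ) : ℝ :=
  sInf {d : ℝ | ∃ x y : X, ‖x‖ = 1 ∧ ‖y‖ = 1 ∧ ε ≤ ‖x - y‖ ∧ d = 1 - ‖x + y‖ / 2}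

/-- The modulus of smoothness of a normed space `X`. -/
def modSmooth (X : Type*) [NormedAddCommGroup X] [NormedSpace ℝ X] (τ : ℝ) : ℝ :=
  sSup {d : ℝ | ∃ x y : X, ‖x‖ = 1 ∧ ‖y‖ = 1 ∧ d = (‖x + τ • y‖ + ‖x - τ • y‖) / 2 - 1}

/-- `X` is uniformly convex: the modulus of convexity is positive for positive ε. -/
def UnifConvex (X : Type*) [NormedAddCommGroup X] : Prop :=
  ∀ ε : ℝ, 0 < ε → ε ≤ 2 → 0 < modConvex X ε

/-- `X` is uniformly smooth: `ρ_X(τ)/τ → 0` as `τ → 0⁺`. -/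
def UnifSmooth (X : Type*) [NormedAddCommGroup X] [NormedSpace ℝ X] : Prop :=
  Tendsto (fun τ => modSmooth X τ / τ) (𝓝[>] (0 : ℝ)) (𝓝 0)

/-- `X` is uniformly convex of power type `ρ`. -/
def PowerConvex (X : Type*) [NormedAddCommGroup X] (ρ : ℝ) : Prop :=
  ∃ c > (0 : ℝ), ∀ ε ∈ Set.Icc (0 : ℝ) 2, c * ε ^ ρ ≤ modConvex X ε

/-- `X` is uniformly smooth of power type `σ` (with `σ > 1`). -/
def PowerSmooth (X : Type*) [NormedAddCommGroup X] [NormedSpace ℝ X] (σ : ℝ) : Prop :=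
  1 < σ ∧ ∃ C > (0 : ℝ), ∀ τ ∈ Set.Icc (0 : ℝ) 1, modSmooth X τ ≤ C * τ ^ σ

variable {X : Type*} [NormedAddCommGroup X] [NormedSpace ℝ X]

/-- The duality mapping `j_p`, the Fréchet derivative of `x ↦ (1/p)‖x‖^p`. -/
def dualityMap (p : ℝ) (x : X) : X →L[ℝ] ℝ :=
  fderiv ℝ (fun y : X => 1 / p * ‖y‖ ^ p) x

/-- The Bregman distance `D_p(x, y)`. -/
def bregmanDist (p : ℝ) (x y : X) : ℝ :=
  1 / p * ‖x‖ ^ p - 1 / p * ‖y‖ ^ p - dualityMap p y (x - y)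

/-- The Bregman projection of `x` onto the set `S`: the minimizer of `m ↦ D_p(m, x)` over `S`. -/
def bregmanProj (p : ℝ) (S : Set X) (x : X) : X :=
  letI : Nonempty X := ⟨x⟩
  Classical.epsilon fun y => y ∈ S ∧ ∀ m ∈ S, bregmanDist p y x ≤ bregmanDist p m x

/-- The Bregman distance `D_p(S, x)` from the point `x` to the set `S`. -/
def bregmanDistSet (p : ℝ) (S : Set X) (x : X) : ℝ :=
  bregmanDist p (bregmanProj p S x) x

/-- The metric projection of `x` onto the set `S`: the point of `S` nearest to `x`. -/
def metricProj (S : Set X) (x : X) : X :=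
  letI : Nonempty X := ⟨x⟩
  Classical.epsilon fun y => y ∈ S ∧ ∀ m ∈ S, ‖x - y‖ ≤ ‖x - m‖

/-- The sequence `x` is Bregman monotone with respect to the set `C`. -/
def BregmanMonotone (p : ℝ) {X : Type*} [NormedAddCommGroup X] [NormedSpace ℝ X]
    (C : Set X) (x : ℕ → X) : Prop :=
  ∀ z ∈ C, ∀ k l : ℕ, l ≤ k → bregmanDist p z (x k) ≤ bregmanDist p z (x l)

/-!
For differentiable norm, `j_p y = ‖y‖ ^ (p - 1) • D‖·‖(y)` has norm at most `‖y‖ ^ (p - 1)`, so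
`D_p(x, y)` dominates the scalar Bregman distance
`‖x‖ ^ p / p + (1 - 1 / p) * ‖y‖ ^ p - ‖y‖ ^ (p - 1) * ‖x‖`. Young's inequality makes it
nonnegative, and its leading terms make it coercive in either variable.

Uniform convexity of the norm passes to `‖·‖ ^ p` on balls, in midpoint form. As `D_p(·, y)` differs
from `‖·‖ ^ p / p` by an affine function, its minimizing sequences are Cauchy, so that Bregman
projections onto complete convex sets exist. And since `D_p` vanishes on the diagonal and is
nonnegative at midpoints, it controls the distance as long as the second argument stays bounded.

If `z n` is the Bregman projection of `x n`, then monotonicity bounds `x` and gives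
`D_p(z n, x k) ≤ D_p(z n, x n) → 0` for `k ≥ n`. Hence `z n` is close to every later `x k`, both
sequences are Cauchy, and they have the same limit.
-/

section Moduli

theorem modConvex_le {X : Type*} [NormedAddCommGroup X] {x y : X} {ε : ℝ} (hx : ‖x‖ = 1)
    (hy : ‖y‖ = 1) (hxy : ε ≤ ‖x - y‖) : modConvex X ε ≤ 1 - ‖x + y‖ / 2 := by
  refine csInf_le ⟨0, ?_⟩ ⟨x, y, hx, hy, hxy, rfl⟩
  rintro _ ⟨a, b, ha, hb, -, rfl⟩
  linarith [norm_add_le a b]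

theorem UnifConvex.uniformConvexSpace {X : Type*} [NormedAddCommGroup X] (h : UnifConvex X) :
    UniformConvexSpace X where
  uniform_convex ε hε := by
    by_cases hε2 : ε ≤ 2
    · refine ⟨2 * modConvex X ε, mul_pos two_pos (h ε hε hε2), fun x hx y hy hxy ↦ ?_⟩
      linarith [modConvex_le hx hy hxy]
    · refine ⟨1, one_pos, fun x hx y hy hxy ↦ ?_⟩
      linarith [norm_sub_le x y]

theorem le_modSmooth {x y : X} (hx : ‖x‖ = 1) (hy : ‖y‖ = 1) (τ : ℝ) :
    (‖x + τ • y‖ + ‖x - τ • y‖) / 2 - 1 ≤ modSmooth X τ := by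
  refine le_csSup ⟨|τ|, ?_⟩ ⟨x, y, hx, hy, rfl⟩
  rintro _ ⟨a, b, ha, hb, rfl⟩
  have hτb : ‖τ • b‖ = |τ| := by rw [norm_smul, hb, mul_one, Real.norm_eq_abs]
  linarith [norm_add_le a (τ • b), norm_sub_le a (τ • b)]

theorem norm_add_add_norm_sub_sub_two_le_modSmooth {x : X} (hx : ‖x‖ = 1) {h : X} (hh : h ≠ 0) :
    ‖x + h‖ + ‖x - h‖ - 2 ≤ 2 * modSmooth X ‖h‖ := by
  have hdir : ‖‖h‖⁻¹ • h‖ = 1 := norm_smul_inv_norm (𝕜 := ℝ) hh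
  have hsmul : ‖h‖ • ‖h‖⁻¹ • h = h := smul_inv_smul₀ (norm_ne_zero_iff.2 hh) h
  have := le_modSmooth hx hdir ‖h‖
  rw [hsmul] at this
  linarith

theorem UnifSmooth.differentiableAt_norm_of_norm_eq_one (hX : UnifSmooth X) {x : X}
    (hx : ‖x‖ = 1) : DifferentiableAt ℝ (‖·‖) x := by
  obtain ⟨g, hg, hgx⟩ := exists_dual_vector'' ℝ x
  have hgx : g x = 1 := by rw [hgx, hx]; rfl
  have hg_le (v : X) : g v ≤ ‖v‖ :=
    (le_abs_self _).trans ((g.le_of_opNorm_le hg v).trans_eq (one_mul _))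
  have hderiv : HasFDerivAt (‖·‖) g x := by
    rw [hasFDerivAt_iff_isLittleO_nhds_zero, Asymptotics.isLittleO_iff]
    intro c hc
    have hsmall : ∀ᶠ τ in 𝓝[>] (0 : ℝ), modSmooth X τ / τ < c / 2 :=
      hX.eventually (gt_mem_nhds (half_pos hc))
    filter_upwards [tendsto_norm_zero.eventually (eventually_nhdsWithin_iff.1 hsmall)] with h hh
    obtain rfl | h0 := eq_or_ne h 0
    · simp
    have hmod : modSmooth X ‖h‖ < c / 2 * ‖h‖ :=
      (div_lt_iff₀ (norm_pos_iff.2 h0)).1 (hh (norm_pos_iff.2 h0))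
    have hsym := norm_add_add_norm_sub_sub_two_le_modSmooth hx h0
    have hadd := hg_le (x + h)
    have hsub := hg_le (x - h)
    rw [map_add, hgx] at hadd
    rw [map_sub, hgx] at hsub
    rw [Real.norm_eq_abs, abs_le, hx]
    constructor <;> linarith
  exact hderiv.differentiableAt

theorem UnifSmooth.differentiableAt_norm (hX : UnifSmooth X) {x : X} (hx : x ≠ 0) :
    DifferentiableAt ℝ (‖·‖) x :=
  (differentiableAt_norm_smul (inv_ne_zero (norm_ne_zero_iff.2 hx))).2 <|
    hX.differentiableAt_norm_of_norm_eq_one (norm_smul_inv_norm (𝕜 := ℝ) hx)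

end Moduli

section UniformMidpointConvexity

/-- The midpoint form of uniform convexity of `f` on `s`: at the midpoint of two points of `s` at
distance at least `ε`, the convexity inequality for `f` holds with a gain `δ` depending only on `ε`.
Membership of the midpoint in `s` is not required. -/
def UniformMidpointConvexOn (s : Set X) (f : X → ℝ) : Prop :=
  ∀ ε > 0, ∃ δ > 0, ∀ x ∈ s, ∀ y ∈ s, ε ≤ dist x y → f (midpoint ℝ x y) ≤ (f x + f y) / 2 - δ

variable {s t C : Set X} {f : X → ℝ}

theorem UniformMidpointConvexOn.mono (hf : UniformMidpointConvexOn t f) (hst : s ⊆ t) :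
    UniformMidpointConvexOn s f := fun ε hε ↦
  let ⟨δ, hδ, h⟩ := hf ε hε
  ⟨δ, hδ, fun x hx y hy ↦ h x (hst hx) y (hst hy)⟩

theorem uniformMidpointConvexOn_of_isCompact (hs : IsCompact s) (hf : StrictConvexOn ℝ s f)
    (hcont : ContinuousOn f s) : UniformMidpointConvexOn s f := by
  intro ε hε
  let gap : X × X → ℝ := fun q ↦ (f q.1 + f q.2) / 2 - f (midpoint ℝ q.1 q.2)
  let K : Set (X × X) := s ×ˢ s ∩ {q | ε ≤ dist q.1 q.2}
  have hK : IsCompact K :=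
    (hs.prod hs).inter_right (isClosed_le continuous_const continuous_dist)
  have hgap_cont : ContinuousOn gap K := by
    have hfst : ContinuousOn (fun q : X × X ↦ f q.1) K :=
      hcont.comp continuousOn_fst fun q hq ↦ hq.1.1
    have hsnd : ContinuousOn (fun q : X × X ↦ f q.2) K :=
      hcont.comp continuousOn_snd fun q hq ↦ hq.1.2
    have hmid : Continuous fun q : X × X ↦ midpoint ℝ q.1 q.2 := by
      simp only [midpoint_eq_smul_add]; fun_prop
    exact ((hfst.add hsnd).div_const 2).sub <|
      hcont.comp hmid.continuousOn fun q hq ↦ hf.1.midpoint_mem hq.1.1 hq.1.2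
  have hgap_pos : ∀ q ∈ K, 0 < gap q := by
    rintro ⟨x, y⟩ ⟨⟨hx, hy⟩, hxy⟩
    have hne : x ≠ y := dist_pos.1 (hε.trans_le hxy)
    have := hf.2 hx hy hne one_half_pos one_half_pos (add_halves 1)
    rw [← smul_add, one_div, ← invOf_eq_inv, ← midpoint_eq_smul_add, invOf_eq_inv, smul_eq_mul,
      smul_eq_mul] at this
    exact sub_pos.2 (by linarith)
  obtain hempty | hne := K.eq_empty_or_nonempty
  · exact ⟨1, one_pos, fun x hx y hy hxy ↦
      (Set.eq_empty_iff_forall_notMem.1 hempty (x, y) ⟨⟨hx, hy⟩, hxy⟩).elim⟩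
  · obtain ⟨q, hq, hmin⟩ := hK.exists_isMinOn hne hgap_cont
    refine ⟨gap q, hgap_pos q hq, fun x hx y hy hxy ↦ ?_⟩
    exact le_sub_comm.1 (isMinOn_iff.1 hmin (x, y) ⟨⟨hx, hy⟩, hxy⟩)

theorem UniformMidpointConvexOn.cauchySeq {I : ℝ} {u : ℕ → X} (hf : UniformMidpointConvexOn s f)
    (hus : ∀ n, u n ∈ s) (hfu : Tendsto (fun n ↦ f (u n)) atTop (𝓝 I))
    (hmid : ∀ m n, I ≤ f (midpoint ℝ (u m) (u n))) : CauchySeq u := by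
  rw [Metric.cauchySeq_iff]
  intro ε hε
  obtain ⟨δ, hδ, hgain⟩ := hf ε hε
  obtain ⟨N, hN⟩ :=
    (hfu.eventually (gt_mem_nhds (lt_add_of_pos_right I hδ))).exists_forall_of_atTop
  refine ⟨N, fun m hm n hn ↦ ?_⟩
  by_contra! hmn
  linarith [hgain _ (hus m) _ (hus n) hmn, hmid m n, hN m hm, hN n hn]

theorem exists_isMinOn_of_uniformMidpointConvexOn (hC : IsComplete C) (hconv : Convex ℝ C)
    (hne : C.Nonempty) (hbdd : BddBelow (f '' C)) (hcont : ContinuousOn f C)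
    (hf : ∀ a, UniformMidpointConvexOn {x ∈ C | f x ≤ a} f) : ∃ m ∈ C, IsMinOn f C m := by
  have hlow : ∀ x ∈ C, sInf (f '' C) ≤ f x := fun x hx ↦ csInf_le hbdd ⟨x, hx, rfl⟩
  obtain ⟨v, hv_anti, hv_lim, hv_mem⟩ := exists_seq_tendsto_sInf (hne.image f) hbdd
  choose u huC hfu using hv_mem
  obtain rfl : (fun n ↦ f (u n)) = v := funext hfu
  have hcauchy : CauchySeq u := (hf (f (u 0))).cauchySeq
    (fun n ↦ ⟨huC n, hv_anti n.zero_le⟩) hv_lim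
    fun m n ↦ hlow _ (hconv.midpoint_mem (huC m) (huC n))
  obtain ⟨m, hmC, hm⟩ := cauchySeq_tendsto_of_isComplete hC huC hcauchy
  have hfm : Tendsto (fun n ↦ f (u n)) atTop (𝓝 (f m)) :=
    (hcont m hmC).tendsto.comp (tendsto_nhdsWithin_iff.2 ⟨hm, Eventually.of_forall huC⟩)
  have hfm_eq : f m = sInf (f '' C) := tendsto_nhds_unique hfm hv_lim
  exact ⟨m, hmC, isMinOn_iff.2 fun x hx ↦ hfm_eq ▸ hlow x hx⟩

end UniformMidpointConvexity

section PowerOfNorm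

variable {p : ℝ}

theorem norm_midpoint (x y : X) : ‖midpoint ℝ x y‖ = ‖x + y‖ / 2 := by
  rw [midpoint_eq_smul_add, invOf_eq_inv, norm_smul_of_nonneg (by norm_num), inv_mul_eq_div]

theorem exists_forall_norm_add_le_two_mul_max_sub [UniformConvexSpace X] (R : ℝ) {ε : ℝ}
    (hε : 0 < ε) : ∃ δ > 0, ∀ x y : X, ‖x‖ ≤ R → ‖y‖ ≤ R → ε ≤ ‖x - y‖ →
      ‖x + y‖ ≤ 2 * max ‖x‖ ‖y‖ - δ := by
  obtain hR | hR := le_or_gt R 0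
  · refine ⟨1, one_pos, fun x y hx hy hxy ↦ ?_⟩
    linarith [norm_sub_le x y]
  obtain ⟨δ, hδ, h⟩ := exists_forall_closed_ball_dist_add_le_two_sub X (div_pos hε hR)
  refine ⟨ε / 2 * δ, by positivity, fun x y hx hy hxy ↦ ?_⟩
  set r := max ‖x‖ ‖y‖
  have hεr : ε / 2 ≤ r := by
    linarith [norm_sub_le x y, le_max_left ‖x‖ ‖y‖, le_max_right ‖x‖ ‖y‖]
  have hr : 0 < r := (half_pos hε).trans_le hεr
  have hscale (v : X) : ‖r⁻¹ • v‖ = ‖v‖ / r := by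
    rw [norm_smul_of_nonneg (inv_nonneg.2 hr.le), inv_mul_eq_div]
  have hunit : ‖x + y‖ / r ≤ 2 - δ := by
    rw [← hscale, smul_add]
    refine h ?_ ?_ ?_
    · rw [hscale, div_le_one hr]; exact le_max_left _ _
    · rw [hscale, div_le_one hr]; exact le_max_right _ _
    · rw [← smul_sub, hscale]
      exact div_le_div₀ (norm_nonneg _) hxy hr (max_le hx hy)
  calc ‖x + y‖ ≤ (2 - δ) * r := (div_le_iff₀ hr).1 hunit
    _ = 2 * r - r * δ := by ring
    _ ≤ 2 * r - ε / 2 * δ := by gcongr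

theorem uniformMidpointConvexOn_rpow_Icc (hp : 1 < p) (R : ℝ) :
    UniformMidpointConvexOn (Set.Icc 0 R) fun t : ℝ ↦ t ^ p :=
  uniformMidpointConvexOn_of_isCompact isCompact_Icc
    ((strictConvexOn_rpow hp).subset Set.Icc_subset_Ici_self (convex_Icc 0 R))
    (Real.continuous_rpow_const (by linarith)).continuousOn

theorem rpow_add_div_two_le (hp : 1 ≤ p) {a b : ℝ} (ha : 0 ≤ a) (hb : 0 ≤ b) :
    ((a + b) / 2) ^ p ≤ (a ^ p + b ^ p) / 2 := by
  have := (convexOn_rpow hp).2 ha hb one_half_pos.le one_half_pos.le (add_halves 1)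
  simp only [smul_eq_mul] at this
  rw [show (a + b) / 2 = 1 / 2 * a + 1 / 2 * b by ring]
  linarith

/-- If `‖x‖` and `‖y‖` differ substantially, the gain comes from the scalar function `t ↦ t ^ p`;
otherwise it comes from the uniform convexity of the norm. -/
theorem uniformMidpointConvexOn_norm_rpow [UniformConvexSpace X] (hp : 1 < p) (R : ℝ) :
    UniformMidpointConvexOn (Metric.closedBall (0 : X) R) fun x ↦ ‖x‖ ^ p := by
  intro ε hε
  have _ : 0 ≤ p := by linarith
  obtain ⟨c, hc, hnorm⟩ := exists_forall_norm_add_le_two_mul_max_sub (X := X) R hε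
  obtain ⟨d, hd, hscalar⟩ := uniformMidpointConvexOn_rpow_Icc hp R (c / 2) (half_pos hc)
  refine ⟨min d ((c / 4) ^ p), by positivity, fun x hx y hy hxy ↦ ?_⟩
  rw [mem_closedBall_zero_iff] at hx hy
  rw [dist_eq_norm] at hxy
  simp only [norm_midpoint]
  obtain hfar | hnear := le_or_gt (c / 2) (dist ‖x‖ ‖y‖)
  · have hgain : ((‖x‖ + ‖y‖) / 2) ^ p ≤ (‖x‖ ^ p + ‖y‖ ^ p) / 2 - d := by
      have := hscalar _ ⟨norm_nonneg x, hx⟩ _ ⟨norm_nonneg y, hy⟩ hfar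
      rwa [midpoint_eq_smul_add, invOf_eq_inv, smul_eq_mul, inv_mul_eq_div] at this
    calc (‖x + y‖ / 2) ^ p ≤ ((‖x‖ + ‖y‖) / 2) ^ p := by gcongr; exact norm_add_le x y
      _ ≤ (‖x‖ ^ p + ‖y‖ ^ p) / 2 - d := hgain
      _ ≤ (‖x‖ ^ p + ‖y‖ ^ p) / 2 - min d ((c / 4) ^ p) := by gcongr; exact min_le_left _ _
  · have hgap : ‖x + y‖ / 2 + c / 4 ≤ (‖x‖ + ‖y‖) / 2 := by
      rw [Real.dist_eq, abs_lt] at hnear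
      have hmax : max ‖x‖ ‖y‖ ≤ (‖x‖ + ‖y‖) / 2 + c / 4 := max_le (by linarith) (by linarith)
      linarith [hnorm x y hx hy hxy]
    have hgain : (‖x + y‖ / 2) ^ p + (c / 4) ^ p ≤ (‖x‖ ^ p + ‖y‖ ^ p) / 2 :=
      calc (‖x + y‖ / 2) ^ p + (c / 4) ^ p ≤ (‖x + y‖ / 2 + c / 4) ^ p :=
            Real.add_rpow_le_rpow_add (by positivity) (by positivity) hp.le
        _ ≤ ((‖x‖ + ‖y‖) / 2) ^ p := by gcongr
        _ ≤ (‖x‖ ^ p + ‖y‖ ^ p) / 2 :=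
            rpow_add_div_two_le hp.le (norm_nonneg x) (norm_nonneg y)
    linarith [min_le_right d ((c / 4) ^ p)]

theorem tendsto_mul_rpow_sub_mul_rpow_atTop {a q : ℝ} (ha : 0 < a) (hq : 0 < q) (hqp : q < p)
    (b : ℝ) : Tendsto (fun t : ℝ ↦ a * t ^ p - b * t ^ q) atTop atTop := by
  have hfactor : Tendsto (fun t : ℝ ↦ t ^ q * (a * t ^ (p - q) - b)) atTop atTop :=
    (tendsto_rpow_atTop hq).atTop_mul_atTop₀ <| tendsto_atTop_add_const_right _ _ <|
      (tendsto_rpow_atTop (sub_pos.2 hqp)).const_mul_atTop ha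
  refine hfactor.congr' ?_
  filter_upwards [eventually_gt_atTop 0] with t ht
  rw [Real.rpow_sub ht]
  field_simp

end PowerOfNorm

section DualityMap

variable {p : ℝ}

theorem hasFDerivAt_norm_rpow_zero (hp : 1 < p) :
    HasFDerivAt (fun x : X ↦ ‖x‖ ^ p) (0 : X →L[ℝ] ℝ) 0 := by
  have hlim : Tendsto (fun x : X ↦ ‖x‖ ^ (p - 1)) (𝓝 0) (𝓝 0) := by
    have : ContinuousAt (fun x : X ↦ ‖x‖ ^ (p - 1)) 0 :=
      continuous_norm.continuousAt.rpow_const (Or.inr (by linarith))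
    simpa [ContinuousAt, Real.zero_rpow (sub_pos.2 hp).ne'] using this
  have hlittle : (fun x : X ↦ ‖x‖ ^ (p - 1) * ‖x‖) =o[𝓝 0] fun x ↦ (1 : ℝ) * ‖x‖ :=
    ((Asymptotics.isLittleO_one_iff ℝ).2 hlim).mul_isBigO (Asymptotics.isBigO_refl _ _)
  have hpow (x : X) : ‖x‖ ^ (p - 1) * ‖x‖ = ‖x‖ ^ p := by
    rw [← Real.rpow_add_one' (norm_nonneg x) (by linarith), sub_add_cancel]
  simp only [hpow, one_mul] at hlittle
  rw [hasFDerivAt_iff_isLittleO_nhds_zero]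
  simpa [Real.zero_rpow (by linarith : p ≠ 0)] using hlittle.of_norm_right

/-- At `x = 0` the norm is not differentiable, but the factor `‖x‖ ^ (p - 1)` vanishes. -/
theorem hasFDerivAt_inv_mul_norm_rpow (hp : 1 < p) {x : X}
    (hx : x ≠ 0 → DifferentiableAt ℝ (‖·‖) x) :
    HasFDerivAt (fun y : X ↦ 1 / p * ‖y‖ ^ p) (‖x‖ ^ (p - 1) • fderiv ℝ (‖·‖) x) x := by
  obtain rfl | h0 := eq_or_ne x 0
  · simpa [Real.zero_rpow (sub_pos.2 hp).ne'] using
      (hasFDerivAt_norm_rpow_zero hp).const_mul (1 / p)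
  · refine (((hx h0).hasFDerivAt.rpow_const (Or.inr hp.le)).const_mul (1 / p)).congr_fderiv ?_
    rw [smul_smul, ← mul_assoc, one_div_mul_cancel (by linarith), one_mul]

theorem dualityMap_eq_smul_fderiv_norm (hp : 1 < p) {x : X}
    (hx : x ≠ 0 → DifferentiableAt ℝ (‖·‖) x) :
    dualityMap p x = ‖x‖ ^ (p - 1) • fderiv ℝ (‖·‖) x :=
  (hasFDerivAt_inv_mul_norm_rpow hp hx).fderiv

theorem dualityMap_apply_le (hp : 1 < p) {x : X} (hx : x ≠ 0 → DifferentiableAt ℝ (‖·‖) x)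
    (v : X) : dualityMap p x v ≤ ‖x‖ ^ (p - 1) * ‖v‖ := by
  have hnorm : ‖fderiv ℝ (‖·‖) x‖ ≤ 1 := by
    simpa using norm_fderiv_le_of_lipschitz ℝ lipschitzWith_one_norm (x₀ := x)
  have hv : fderiv ℝ (‖·‖) x v ≤ ‖v‖ :=
    (le_abs_self _).trans (((fderiv ℝ (‖·‖) x).le_of_opNorm_le hnorm v).trans_eq (one_mul _))
  rw [dualityMap_eq_smul_fderiv_norm hp hx]
  exact mul_le_mul_of_nonneg_left hv (by positivity)

theorem dualityMap_apply_self (hp : 1 < p) {x : X} (hx : x ≠ 0 → DifferentiableAt ℝ (‖·‖) x) :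
    dualityMap p x x = ‖x‖ ^ p := by
  obtain rfl | h0 := eq_or_ne x 0
  · simp [Real.zero_rpow (by linarith : p ≠ 0)]
  · rw [dualityMap_eq_smul_fderiv_norm hp hx, smul_apply,
      (hx h0).fderiv_norm_self, smul_eq_mul, Real.rpow_sub_one (norm_ne_zero_iff.2 h0),
      div_mul_cancel₀ _ (norm_ne_zero_iff.2 h0)]

end DualityMap

section BregmanDistance

variable {p : ℝ}

theorem bregmanDist_self (p : ℝ) (x : X) : bregmanDist p x x = 0 := by
  simp [bregmanDist]

theorem continuous_bregmanDist_left (hp : 0 ≤ p) (y : X) :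
    Continuous fun x ↦ bregmanDist p x y := by
  have : Continuous fun x : X ↦ ‖x‖ ^ p := continuous_norm.rpow_const fun _ ↦ Or.inr hp
  unfold bregmanDist
  fun_prop

/-- The right-hand side is the Bregman distance of the real numbers `‖x‖` and `‖y‖`. -/
theorem scalar_bregmanDist_le_bregmanDist (hp : 1 < p) (x : X) {y : X}
    (hy : y ≠ 0 → DifferentiableAt ℝ (‖·‖) y) :
    1 / p * ‖x‖ ^ p + (1 - 1 / p) * ‖y‖ ^ p - ‖y‖ ^ (p - 1) * ‖x‖ ≤ bregmanDist p x y := by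
  rw [bregmanDist, map_sub, dualityMap_apply_self hp hy]
  linarith [dualityMap_apply_le hp hy x]

theorem bregmanDist_nonneg (hp : 1 < p) (x : X) {y : X}
    (hy : y ≠ 0 → DifferentiableAt ℝ (‖·‖) y) : 0 ≤ bregmanDist p x y := by
  have hpq : p.HolderConjugate p.conjExponent := .conjExponent hp
  have hyoung := Real.young_inequality_of_nonneg (norm_nonneg x)
    (Real.rpow_nonneg (norm_nonneg y) (p - 1)) hpq
  rw [← Real.rpow_mul (norm_nonneg y), hpq.sub_one_mul_conj, div_eq_inv_mul, div_eq_inv_mul,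
    ← hpq.one_sub_inv, ← one_div] at hyoung
  linarith [scalar_bregmanDist_le_bregmanDist hp x hy]

theorem exists_forall_norm_left_le_of_bregmanDist_le (hp : 1 < p) (R K : ℝ) :
    ∃ r, ∀ x y : X, (y ≠ 0 → DifferentiableAt ℝ (‖·‖) y) → ‖y‖ ≤ R → bregmanDist p x y ≤ K →
      ‖x‖ ≤ r := by
  have hp0 : 0 < p := by linarith
  obtain ⟨r, hr⟩ := ((tendsto_mul_rpow_sub_mul_rpow_atTop (one_div_pos.2 hp0) one_pos hp
    (R ^ (p - 1))).eventually_gt_atTop K).exists_forall_of_atTop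
  refine ⟨r, fun x y hy hyR hxy ↦ ?_⟩
  by_contra! hrx
  have hgrow := hr ‖x‖ hrx.le
  rw [Real.rpow_one] at hgrow
  have hcross : ‖y‖ ^ (p - 1) * ‖x‖ ≤ R ^ (p - 1) * ‖x‖ := by gcongr
  have hconst : 0 ≤ (1 - 1 / p) * ‖y‖ ^ p :=
    mul_nonneg (sub_nonneg.2 ((div_le_one hp0).2 hp.le)) (by positivity)
  linarith [scalar_bregmanDist_le_bregmanDist hp x hy]

theorem exists_forall_norm_right_le_of_bregmanDist_le (hp : 1 < p) (x : X) (K : ℝ) :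
    ∃ r, ∀ y : X, (y ≠ 0 → DifferentiableAt ℝ (‖·‖) y) → bregmanDist p x y ≤ K → ‖y‖ ≤ r := by
  have hp0 : 0 < p := by linarith
  have hcoeff : 0 < 1 - 1 / p := sub_pos.2 ((div_lt_one hp0).2 hp)
  obtain ⟨r, hr⟩ := ((tendsto_mul_rpow_sub_mul_rpow_atTop hcoeff (sub_pos.2 hp) (sub_one_lt p)
    ‖x‖).eventually_gt_atTop K).exists_forall_of_atTop
  refine ⟨r, fun y hy hxy ↦ ?_⟩
  by_contra! hry
  have hgrow := hr ‖y‖ hry.le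
  have hconst : 0 ≤ 1 / p * ‖x‖ ^ p := by positivity
  linarith [scalar_bregmanDist_le_bregmanDist hp x hy]

/-- The affine part of `D_p(·, w)` cancels, so the right-hand side does not depend on `w`. -/
theorem half_bregmanDist_add_sub_bregmanDist_midpoint (p : ℝ) (x y w : X) :
    (bregmanDist p x w + bregmanDist p y w) / 2 - bregmanDist p (midpoint ℝ x y) w =
      1 / p * ((‖x‖ ^ p + ‖y‖ ^ p) / 2 - ‖midpoint ℝ x y‖ ^ p) := by
  have hmid : dualityMap p w (midpoint ℝ x y) = (dualityMap p w x + dualityMap p w y) / 2 := by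
    rw [midpoint_eq_smul_add, map_smul, map_add, invOf_eq_inv, smul_eq_mul, inv_mul_eq_div]
  simp only [bregmanDist, map_sub, hmid]
  ring

theorem uniformMidpointConvexOn_bregmanDist (hp : 0 < p) {s : Set X}
    (hs : UniformMidpointConvexOn s fun x ↦ ‖x‖ ^ p) (w : X) :
    UniformMidpointConvexOn s fun x ↦ bregmanDist p x w := by
  intro ε hε
  obtain ⟨δ, hδ, hgain⟩ := hs ε hε
  refine ⟨1 / p * δ, by positivity, fun x hx y hy hxy ↦ ?_⟩
  have hpδ : 1 / p * δ ≤ 1 / p * ((‖x‖ ^ p + ‖y‖ ^ p) / 2 - ‖midpoint ℝ x y‖ ^ p) := by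
    gcongr; linarith [hgain x hx y hy hxy]
  linarith [half_bregmanDist_add_sub_bregmanDist_midpoint p x y w]

theorem exists_forall_dist_lt_of_bregmanDist_lt [UniformConvexSpace X]
    (hX : ∀ x : X, x ≠ 0 → DifferentiableAt ℝ (‖·‖) x) (hp : 1 < p) (R : ℝ) {ε : ℝ} (hε : 0 < ε) :
    ∃ δ > 0, ∀ x y : X, ‖y‖ ≤ R → bregmanDist p x y < δ → dist x y < ε := by
  obtain ⟨r, hr⟩ := exists_forall_norm_left_le_of_bregmanDist_le (X := X) hp R 1
  obtain ⟨δ, hδ, hgain⟩ := uniformMidpointConvexOn_norm_rpow (X := X) hp (max r R) ε hε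
  refine ⟨min 1 (2 * (1 / p * δ)), by positivity, fun x y hy hxy ↦ ?_⟩
  by_contra! hfar
  have hx : ‖x‖ ≤ r := hr x y (hX y) hy (hxy.le.trans (min_le_left _ _))
  have hpδ : 1 / p * δ ≤ 1 / p * ((‖x‖ ^ p + ‖y‖ ^ p) / 2 - ‖midpoint ℝ x y‖ ^ p) := by
    gcongr
    linarith [hgain x (mem_closedBall_zero_iff.2 (hx.trans (le_max_left _ _))) y
      (mem_closedBall_zero_iff.2 (hy.trans (le_max_right _ _))) hfar]
  linarith [half_bregmanDist_add_sub_bregmanDist_midpoint p x y y, bregmanDist_self p y,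
    bregmanDist_nonneg hp (midpoint ℝ x y) (hX y), hxy.trans_le (min_le_right _ _)]

end BregmanDistance

section BregmanProjection

variable {p : ℝ} {C : Set X}

theorem exists_isMinOn_bregmanDist [UniformConvexSpace X]
    (hX : ∀ x : X, x ≠ 0 → DifferentiableAt ℝ (‖·‖) x) (hp : 1 < p) (hC : IsComplete C)
    (hconv : Convex ℝ C) (hne : C.Nonempty) (y : X) :
    ∃ m ∈ C, IsMinOn (fun x ↦ bregmanDist p x y) C m := by
  have hp0 : 0 < p := by linarith
  refine exists_isMinOn_of_uniformMidpointConvexOn hC hconv hne ⟨0, ?_⟩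
    (continuous_bregmanDist_left hp0.le y).continuousOn fun a ↦ ?_
  · rintro _ ⟨x, -, rfl⟩
    exact bregmanDist_nonneg hp x (hX y)
  · obtain ⟨r, hr⟩ := exists_forall_norm_left_le_of_bregmanDist_le (X := X) hp ‖y‖ a
    exact (uniformMidpointConvexOn_bregmanDist hp0
      (uniformMidpointConvexOn_norm_rpow hp r) y).mono fun x hx ↦
        mem_closedBall_zero_iff.2 (hr x y (hX y) le_rfl hx.2)

theorem bregmanProj_mem {x : X} (h : ∃ m ∈ C, IsMinOn (fun z ↦ bregmanDist p z x) C m) :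
    bregmanProj p C x ∈ C :=
  (Classical.epsilon_spec (p := fun y ↦ y ∈ C ∧ ∀ m ∈ C, bregmanDist p y x ≤ bregmanDist p m x)
    h).1

end BregmanProjection

section Convergence

theorem BregmanMonotone.exists_forall_norm_le {p : ℝ} {C : Set X} {x : ℕ → X}
    (hx : BregmanMonotone p C x) (hX : ∀ x : X, x ≠ 0 → DifferentiableAt ℝ (‖·‖) x) (hp : 1 < p)
    (hne : C.Nonempty) : ∃ R, ∀ n, ‖x n‖ ≤ R := by
  obtain ⟨z, hz⟩ := hne
  obtain ⟨R, hR⟩ := exists_forall_norm_right_le_of_bregmanDist_le hp z (bregmanDist p z (x 0))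
  exact ⟨R, fun n ↦ hR (x n) (hX (x n)) (hx z hz n 0 n.zero_le)⟩

theorem exists_mem_tendsto_of_forall_dist_lt {α : Type*} [PseudoMetricSpace α] {C : Set α}
    (hC : IsComplete C) {x z : ℕ → α} (hz : ∀ n, z n ∈ C)
    (h : ∀ ε > 0, ∃ N, ∀ n ≥ N, ∀ k ≥ n, dist (z n) (x k) < ε) :
    ∃ y ∈ C, Tendsto x atTop (𝓝 y) := by
  have hcauchy : CauchySeq z := by
    rw [Metric.cauchySeq_iff']
    intro ε hε
    obtain ⟨N, hN⟩ := h (ε / 2) (half_pos hε)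
    refine ⟨N, fun n hn ↦ ?_⟩
    linarith [dist_triangle_right (z n) (z N) (x n), hN n hn n le_rfl, hN N le_rfl n hn]
  have hdist : Tendsto (fun n ↦ dist (z n) (x n)) atTop (𝓝 0) := by
    rw [Metric.tendsto_atTop]
    intro ε hε
    obtain ⟨N, hN⟩ := h ε hε
    refine ⟨N, fun n hn ↦ ?_⟩
    rw [dist_zero_right, Real.norm_of_nonneg dist_nonneg]
    exact hN n hn n le_rfl
  obtain ⟨y, hyC, hzy⟩ := cauchySeq_tendsto_of_isComplete hC hz hcauchy
  exact ⟨y, hyC, (tendsto_iff_of_dist hdist).1 hzy⟩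

end Convergence

theorem statement11_general {X : Type*} [NormedAddCommGroup X] [NormedSpace ℝ X]
    [UniformConvexSpace X] (hX : ∀ x : X, x ≠ 0 → DifferentiableAt ℝ (‖·‖) x) {p : ℝ} (hp : 1 < p)
    {C : Set X} (hC : IsComplete C) (hconv : Convex ℝ C) (hne : C.Nonempty) {x : ℕ → X}
    (hmono : BregmanMonotone p C x)
    (h : Tendsto (fun n ↦ bregmanDistSet p C (x n)) atTop (𝓝 0)) :
    ∃ y ∈ C, Tendsto x atTop (𝓝 y) := by
  have hproj (n : ℕ) : bregmanProj p C (x n) ∈ C :=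
    bregmanProj_mem (exists_isMinOn_bregmanDist hX hp hC hconv hne (x n))
  obtain ⟨R, hR⟩ := hmono.exists_forall_norm_le hX hp hne
  refine exists_mem_tendsto_of_forall_dist_lt hC hproj fun ε hε ↦ ?_
  obtain ⟨δ, hδ, hdist⟩ := exists_forall_dist_lt_of_bregmanDist_lt hX hp R hε
  obtain ⟨N, hN⟩ := (h.eventually (gt_mem_nhds hδ)).exists_forall_of_atTop
  exact ⟨N, fun n hn k hk ↦
    hdist _ _ (hR k) ((hmono _ (hproj n) k n hk).trans_lt (hN n hn))⟩

theorem statement11 {X : Type*} [NormedAddCommGroup X] [NormedSpace ℝ X] [CompleteSpace X]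
    (hconv : UnifConvex X) (hsmooth : UnifSmooth X) (p : ℝ) (hp : 1 < p)
    (M : Submodule ℝ X) (hM : IsClosed (M : Set X)) (x : ℕ → X)
    (hmono : BregmanMonotone p (M : Set X) x)
    (h : Filter.Tendsto (fun n => bregmanDistSet p (M : Set X) (x n)) Filter.atTop (𝓝 0)) :
    ∃ y ∈ (M : Set X), Filter.Tendsto x Filter.atTop (𝓝 y) := by
  have := hconv.uniformConvexSpace
  exact statement11_general (fun _ ↦ hsmooth.differentiableAt_norm) hp hM.isComplete M.convex
    ⟨0, M.zero_mem⟩ hmono h
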